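/- arXiv:math/9805003 — 2 statements merged into one kernel-verified Lean document; each statement's English description precedes it below -/
import Mathlib

section
/- Let 0 < q < 1 and define B₀(t,u) = ∑_{n∈ℤ} u^{n²} tⁿ for t > 0 and 0 < u < 1. Then lim_{t→1} (B₀(t,t²q) − B₀(1,t²q))/((t+1)(t−1)²) = −(1/2)·(∑_{m,n>0} (−1)^m m q^{m(2n−1)})·B₀(1,q), where the limit is over real t > 0 with t²q < 1. -/
/-!
Pairing `n` with `-n` gives
`B₀(t,u) - B₀(1,u) = ½ (t-1)² ∑ₙ u^{n²} (1 + t + ⋯ + t^{|n|-1})² t^{-|n|}` (`B0_sub`), so dominated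
convergence shows that the limit is `¼ ∑ₙ n² q^{n²}`. Since `∑_m (-1)^m m x^m = -x/(1+x)²`
(`double_sum`), it remains to prove
`∑ₙ n² q^{n²} = 2 B₀(1,q) ∑_{k≥1} q^{2k-1}/(1+q^{2k-1})²` (`theta_moment`).

This is the second logarithmic derivative at `t = 1` of the Jacobi triple product. The triple product
itself is bypassed by working with the finite products
`P_N(t) = ∏_{k≤N} (1 + t q^{2k-1})(1 + t⁻¹ q^{2k-1}) = ∑ₙ a_N(n) tⁿ`. The corresponding identity
between `∑ n² a_N(n)` and `∑ a_N(n)` follows by induction on `N` (`moments`). The functional equation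
of `P_N` (`prodCoeff_ratio`) yields `a_N(n) ≤ q^{n²} a_N(0)` and `a_N(n)/a_N(0) → q^{n²}`, so after
division by `a_N(0)` one may let `N → ∞`.
-/

open Filter

/-- `B₀(t,u) = ∑_{n∈ℤ} u^{n²} tⁿ`. -/
noncomputable def B0 (t u : ℝ) : ℝ := ∑' n : ℤ, u ^ (n ^ 2) * t ^ n

/-- Majorant for all the theta-like series below: a Gaussian beats polynomials and exponentials. -/
theorem summable_theta_bound (k : ℕ) {v r : ℝ} (hv0 : 0 < v) (hv1 : v < 1) (hr : 0 < r) :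
    Summable fun n : ℤ => |(n : ℝ)| ^ k * (v ^ (n ^ 2) * r ^ n.natAbs) := by
  have hT : 0 < -Real.log v / Real.pi :=
    div_pos (neg_pos.2 (Real.log_neg hv0 hv1)) Real.pi_pos
  refine (summable_pow_mul_jacobiTheta₂_term_bound (Real.log r / (2 * Real.pi)) hT k).congr ?_
  intro n
  have hpi := Real.pi_ne_zero
  have h1 : v ^ (n ^ 2) = Real.exp ((n : ℝ) ^ 2 * Real.log v) := by
    rw [← Real.rpow_intCast, Real.rpow_def_of_pos hv0, mul_comm]; push_cast; rfl
  have h2 : r ^ n.natAbs = Real.exp (|(n : ℝ)| * Real.log r) := by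
    have := Real.exp_nat_mul (Real.log r) n.natAbs
    rw [Real.exp_log hr] at this
    rw [← this, Nat.cast_natAbs]; push_cast; rfl
  rw [h1, h2, ← Real.exp_add]
  push_cast
  congr 2
  field_simp
  ring

/-- The Laurent coefficients `a_N(n)` of
`P_N(t) = ∏_{k=1}^{N} (1 + t q^{2k-1})(1 + t⁻¹ q^{2k-1}) = ∑ₙ a_N(n) tⁿ`, defined by the recursion
that multiplication by the factor `(1 + tx)(1 + t⁻¹x) = 1 + x² + x(t + t⁻¹)`, `x = q^{2N+1}`,
induces on coefficients. -/
noncomputable def prodCoeff (q : ℝ) : ℕ → ℤ → ℝ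
  | 0, n => if n = 0 then 1 else 0
  | N + 1, n => (1 + (q ^ (2 * N + 1)) ^ 2) * prodCoeff q N n +
      q ^ (2 * N + 1) * (prodCoeff q N (n - 1) + prodCoeff q N (n + 1))

theorem prodCoeff_neg (q : ℝ) (N : ℕ) (n : ℤ) : prodCoeff q N (-n) = prodCoeff q N n := by
  induction N generalizing n with
  | zero => simp [prodCoeff]
  | succ N ih =>
    simp only [prodCoeff]
    rw [ih, show -n - 1 = -(n + 1) by ring, show -n + 1 = -(n - 1) by ring, ih, ih]
    ring

theorem prodCoeff_nonneg {q : ℝ} (hq : 0 < q) (N : ℕ) (n : ℤ) : 0 ≤ prodCoeff q N n := by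
  induction N generalizing n with
  | zero => simp only [prodCoeff]; split_ifs <;> norm_num
  | succ N ih =>
    simp only [prodCoeff]
    have := ih n
    have := ih (n - 1)
    have := ih (n + 1)
    positivity

theorem prodCoeff_zero_pos {q : ℝ} (hq : 0 < q) (N : ℕ) : 0 < prodCoeff q N 0 := by
  induction N with
  | zero => simp [prodCoeff]
  | succ N ih =>
    simp only [prodCoeff]
    have := prodCoeff_nonneg hq N (0 - 1)
    have := prodCoeff_nonneg hq N (0 + 1)
    positivity

/-- Coefficient form of the functional equation
`(q t + q^{2N}) P_N(q² t) = (1 + q^{2N+1} t) P_N(t)` of the finite product. -/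
theorem prodCoeff_ratio {q : ℝ} (hq : 0 < q) (N : ℕ) (n : ℤ) :
    prodCoeff q N n * (1 - q ^ (2 * N + 1) * q ^ (2 * n - 1)) =
      prodCoeff q N (n - 1) * (q ^ (2 * n - 1) - q ^ (2 * N + 1)) := by
  induction N generalizing n with
  | zero =>
    have hq' := hq.ne'
    simp only [prodCoeff]
    rcases eq_or_ne n 0 with rfl | h0
    · simp [hq']
    rcases eq_or_ne n 1 with rfl | h1
    · simp
    have : n - 1 ≠ 0 := by omega
    simp [h0, this]
  | succ N ih =>
    have e1 := ih n
    have e2 := ih (n + 1)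
    have e3 := ih (n - 1)
    have hz1 : q ^ (2 * (n + 1) - 1) = q ^ 2 * q ^ (2 * n - 1) := by
      rw [← zpow_natCast q 2, ← zpow_add₀ hq.ne']; congr 1; push_cast; ring
    have hz2 : q ^ (2 * n - 1) = q ^ 2 * q ^ (2 * (n - 1) - 1) := by
      rw [← zpow_natCast q 2, ← zpow_add₀ hq.ne']; congr 1; push_cast; ring
    have hx : q ^ (2 * (N + 1) + 1) = q ^ 2 * q ^ (2 * N + 1) := by ring
    simp only [prodCoeff, hx]
    rw [hz1] at e2
    rw [hz2] at e1 e2 ⊢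
    simp only [show n + 1 - 1 = n by ring, show n - 1 + 1 = n by ring] at e2 ⊢
    generalize q ^ (2 * (n - 1) - 1) = w at *
    generalize q ^ (2 * N + 1) = x at *
    -- The multipliers are the coefficients of `(1 + t q² x)(1 + x / t)`.
    linear_combination (1 + q ^ 2 * x ^ 2) * e1 + x * e2 + q ^ 2 * x * e3

theorem zpow_sq_succ {q : ℝ} (hq : 0 < q) (n : ℕ) :
    q ^ (((n + 1 : ℕ) : ℤ) ^ 2) = q ^ (2 * ((n + 1 : ℕ) : ℤ) - 1) * q ^ ((n : ℤ) ^ 2) := by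
  rw [← zpow_add₀ hq.ne']; congr 1; push_cast; ring

/-- Domination `a_N(n) ≤ q^{n²} a_N(0)`, uniform in `N`: by `prodCoeff_ratio`,
`a_N(n) ≤ q^{2n-1} a_N(n-1)` for `n ≥ 1`. -/
theorem prodCoeff_le {q : ℝ} (hq : 0 < q) (hq1 : q < 1) (N : ℕ) (n : ℤ) :
    prodCoeff q N n ≤ q ^ (n ^ 2) * prodCoeff q N 0 := by
  have key : ∀ n : ℕ, prodCoeff q N n ≤ q ^ ((n : ℤ) ^ 2) * prodCoeff q N 0 := by
    intro n
    induction n with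
    | zero => simp
    | succ n ih =>
      have e := prodCoeff_ratio hq N ((n + 1 : ℕ) : ℤ)
      have hp : ((n + 1 : ℕ) : ℤ) - 1 = n := by push_cast; ring
      rw [hp] at e
      rw [zpow_sq_succ hq]
      have hz0 : 0 < q ^ (2 * ((n + 1 : ℕ) : ℤ) - 1) := zpow_pos hq _
      have hz1 : q ^ (2 * ((n + 1 : ℕ) : ℤ) - 1) < 1 :=
        zpow_lt_one₀ hq hq1 (by push_cast; omega)
      have hx0 : 0 < q ^ (2 * N + 1) := pow_pos hq _
      have hx1 : q ^ (2 * N + 1) < 1 := pow_lt_one₀ hq.le hq1 (by omega)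
      have ha := prodCoeff_nonneg hq N (n : ℤ)
      generalize q ^ (2 * ((n + 1 : ℕ) : ℤ) - 1) = z at *
      generalize q ^ (2 * N + 1) = x at *
      have hpos : 0 < 1 - x * z := by nlinarith
      have h1 : prodCoeff q N ((n + 1 : ℕ) : ℤ) ≤ z * prodCoeff q N n := by
        refine le_of_mul_le_mul_right ?_ hpos
        have : 0 ≤ prodCoeff q N n * (x * (1 - z ^ 2)) :=
          mul_nonneg ha (mul_nonneg hx0.le (by nlinarith))
        nlinarith
      calc _ ≤ _ := h1
        _ ≤ z * (q ^ ((n : ℤ) ^ 2) * prodCoeff q N 0) := by gcongr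
        _ = _ := by ring
  rcases Int.natAbs_eq n with h | h
  · rw [h]; exact key _
  · rw [h, prodCoeff_neg, neg_sq]; exact key _

/-- The normalised coefficients tend to `q^{n²}`; this is the limiting form of the Jacobi triple
product, with the constant factor `∏ (1 - q^{2k})` normalised away. -/
theorem tendsto_prodCoeff {q : ℝ} (hq : 0 < q) (hq1 : q < 1) (n : ℤ) :
    Tendsto (fun N => prodCoeff q N n / prodCoeff q N 0) atTop (nhds (q ^ (n ^ 2))) := by
  have hx : Tendsto (fun N : ℕ => q ^ (2 * N + 1)) atTop (nhds 0) :=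
    (tendsto_pow_atTop_nhds_zero_of_lt_one hq.le hq1).comp
      (tendsto_atTop_mono (fun N => by simp only [id]; omega) tendsto_id)
  have key : ∀ n : ℕ, Tendsto (fun N => prodCoeff q N n / prodCoeff q N 0) atTop
      (nhds (q ^ ((n : ℤ) ^ 2))) := by
    intro n
    induction n with
    | zero =>
      simp only [Nat.cast_zero]
      refine (tendsto_congr fun N => div_self (prodCoeff_zero_pos hq N).ne').2 ?_
      simp
    | succ n ih =>
      rw [zpow_sq_succ hq]
      have hz0 : 0 < q ^ (2 * ((n + 1 : ℕ) : ℤ) - 1) := zpow_pos hq _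
      have hz1 : q ^ (2 * ((n + 1 : ℕ) : ℤ) - 1) < 1 :=
        zpow_lt_one₀ hq hq1 (by push_cast; omega)
      have e := fun N => prodCoeff_ratio hq N ((n + 1 : ℕ) : ℤ)
      have hp : ((n + 1 : ℕ) : ℤ) - 1 = n := by push_cast; ring
      rw [hp] at e
      generalize q ^ (2 * ((n + 1 : ℕ) : ℤ) - 1) = z at *
      have hlim := (ih.mul (hx.const_sub z)).div ((hx.mul_const z).const_sub 1) (by simp)
      simp only [sub_zero, zero_mul, div_one] at hlim
      rw [mul_comm z]
      refine hlim.congr fun N => ?_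
      have hx0 : 0 < q ^ (2 * N + 1) := pow_pos hq _
      have hx1 : q ^ (2 * N + 1) < 1 := pow_lt_one₀ hq.le hq1 (by omega)
      have hpos : 0 < 1 - q ^ (2 * N + 1) * z := by nlinarith
      have h0 := (prodCoeff_zero_pos hq N).ne'
      have := e N
      simp only [Pi.div_apply]
      rw [div_eq_div_iff hpos.ne' h0, div_mul_eq_mul_div, div_mul_cancel₀ _ h0, ← this]
  rcases Int.natAbs_eq n with h | h
  · rw [h]; exact key _
  · rw [h]; simp only [prodCoeff_neg, neg_sq]; exact key _

theorem summable_mul_prodCoeff {q : ℝ} (hq : 0 < q) (hq1 : q < 1) (N k : ℕ) :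
    Summable fun n : ℤ => (n : ℝ) ^ k * prodCoeff q N n := by
  refine Summable.of_norm_bounded
    ((summable_theta_bound k hq hq1 one_pos).mul_right (prodCoeff q N 0)) fun n => ?_
  rw [norm_mul, norm_pow, Real.norm_eq_abs, Real.norm_of_nonneg (prodCoeff_nonneg hq N n),
    one_pow, mul_one, mul_assoc]
  gcongr
  exact prodCoeff_le hq hq1 N n

theorem HasSum.congr_of_eq {f g : ℤ → ℝ} {a b : ℝ} (h : HasSum f a) (hf : ∀ n, g n = f n)
    (hab : b = a) : HasSum g b := by
  rw [hab, funext hf]; exact h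

/-- Finite form of the theta identity: it expresses `(t d/dt)² P_N` at `t = 1` through the
logarithmic derivative of the product. In the induction the factor with `x = q^{2N+1}` changes the
zeroth and second moments `A`, `B` into `(1+x)² A` and `(1+x)² B + 2 x A`; the first moment cancels. -/
theorem moments {q : ℝ} (hq : 0 < q) (hq1 : q < 1) (N : ℕ) :
    ∑' n : ℤ, (n : ℝ) ^ 2 * prodCoeff q N n =
      (∑' n : ℤ, prodCoeff q N n) *
        (2 * ∑ k ∈ Finset.range N, q ^ (2 * k + 1) / (1 + q ^ (2 * k + 1)) ^ 2) := by
  induction N with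
  | zero =>
    have : ∀ n : ℤ, (n : ℝ) ^ 2 * prodCoeff q 0 n = 0 := by
      intro n; by_cases h : n = 0 <;> simp [prodCoeff, h]
    simp [this]
  | succ N ih =>
    have s0 : Summable fun n : ℤ => prodCoeff q N n := by
      simpa using summable_mul_prodCoeff hq hq1 N 0
    have s1 : Summable fun n : ℤ => (n : ℝ) * prodCoeff q N n := by
      simpa using summable_mul_prodCoeff hq hq1 N 1
    have s2 := summable_mul_prodCoeff hq hq1 N 2
    obtain ⟨A, hA⟩ := s0
    obtain ⟨C, hC⟩ := s1
    obtain ⟨B, hB⟩ := s2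
    rw [hA.tsum_eq, hB.tsum_eq] at ih
    have hx0 : 0 < q ^ (2 * N + 1) := pow_pos hq _
    have A1 : HasSum (fun n : ℤ => prodCoeff q (N + 1) n) ((1 + q ^ (2 * N + 1)) ^ 2 * A) := by
      have hm : HasSum (fun n : ℤ => prodCoeff q N (n - 1)) A :=
        (Equiv.subRight (1 : ℤ)).hasSum_iff.2 hA
      have hp : HasSum (fun n : ℤ => prodCoeff q N (n + 1)) A :=
        (Equiv.addRight (1 : ℤ)).hasSum_iff.2 hA
      exact ((hA.mul_left (1 + (q ^ (2 * N + 1)) ^ 2)).add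
        ((hm.add hp).mul_left (q ^ (2 * N + 1)))).congr_of_eq (fun n => by simp only [prodCoeff])
        (by ring)
    have B1 : HasSum (fun n : ℤ => (n : ℝ) ^ 2 * prodCoeff q (N + 1) n)
        ((1 + q ^ (2 * N + 1)) ^ 2 * B + 2 * q ^ (2 * N + 1) * A) := by
      have hm : HasSum (fun n : ℤ => (n : ℝ) ^ 2 * prodCoeff q N (n - 1)) (B + 2 * C + A) := by
        refine ((Equiv.addRight (1 : ℤ)).hasSum_iff).1
          (((hB.add (hC.mul_left 2)).add hA).congr_of_eq (fun n => ?_) rfl)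
        simp only [Function.comp, Equiv.coe_addRight, add_sub_cancel_right]
        push_cast; ring
      have hp : HasSum (fun n : ℤ => (n : ℝ) ^ 2 * prodCoeff q N (n + 1)) (B - 2 * C + A) := by
        refine ((Equiv.subRight (1 : ℤ)).hasSum_iff).1
          (((hB.sub (hC.mul_left 2)).add hA).congr_of_eq (fun n => ?_) rfl)
        simp only [Function.comp, Equiv.subRight_apply, sub_add_cancel]
        push_cast; ring
      exact ((hB.mul_left (1 + (q ^ (2 * N + 1)) ^ 2)).add
        ((hm.add hp).mul_left (q ^ (2 * N + 1)))).congr_of_eq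
        (fun n => by simp only [prodCoeff]; ring) (by ring)
    rw [A1.tsum_eq, B1.tsum_eq, Finset.sum_range_succ, ih]
    field_simp

theorem summable_lambert {q : ℝ} (hq : 0 < q) (hq1 : q < 1) :
    Summable fun k : ℕ => q ^ (2 * k + 1) / (1 + q ^ (2 * k + 1)) ^ 2 := by
  refine Summable.of_nonneg_of_le (fun k => by positivity) (fun k => ?_)
    (summable_geometric_of_lt_one hq.le hq1)
  refine (div_le_self (by positivity) ?_).trans (pow_le_pow_of_le_one hq.le hq1.le (by omega))
  have := pow_pos hq (2 * k + 1)
  nlinarith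

/-- The second moment of the theta series, from `moments` as `N → ∞`, by dominated convergence. -/
theorem theta_moment {q : ℝ} (hq : 0 < q) (hq1 : q < 1) :
    ∑' n : ℤ, (n : ℝ) ^ 2 * q ^ (n ^ 2) =
      B0 1 q * (2 * ∑' k : ℕ, q ^ (2 * k + 1) / (1 + q ^ (2 * k + 1)) ^ 2) := by
  have hk : ∀ k : ℕ, Tendsto
      (fun N => ∑' n : ℤ, (n : ℝ) ^ k * (prodCoeff q N n / prodCoeff q N 0)) atTop
      (nhds (∑' n : ℤ, (n : ℝ) ^ k * q ^ (n ^ 2))) := by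
    intro k
    refine tendsto_tsum_of_dominated_convergence (summable_theta_bound k hq hq1 one_pos)
      (fun n => (tendsto_prodCoeff hq hq1 n).const_mul _) (Eventually.of_forall fun N n => ?_)
    rw [norm_mul, norm_pow, Real.norm_eq_abs, one_pow, mul_one,
      Real.norm_of_nonneg (div_nonneg (prodCoeff_nonneg hq N n) (prodCoeff_nonneg hq N 0))]
    gcongr
    exact (div_le_iff₀ (prodCoeff_zero_pos hq N)).2 (prodCoeff_le hq hq1 N n)
  have hR := ((hk 0).mul ((summable_lambert hq hq1).hasSum.tendsto_sum_nat.const_mul 2))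
  have hL := hk 2
  have hB : B0 1 q = ∑' n : ℤ, (n : ℝ) ^ 0 * q ^ (n ^ 2) := by simp [B0]
  rw [hB]
  refine tendsto_nhds_unique hL (hR.congr fun N => ?_)
  simp only [pow_zero, one_mul, ← mul_div_assoc, tsum_div_const]
  rw [moments hq hq1 N]
  simp only [mul_div_assoc]
  ring

/-- Summing over `m` first, with `∑ m (-x)^m = -x/(1+x)²` for `x = q^{2n-1}`. -/
theorem double_sum {q : ℝ} (hq : 0 < q) (hq1 : q < 1) :
    ∑' p : ℕ+ × ℕ+, (-1 : ℝ) ^ (p.1 : ℕ) * (p.1 : ℝ) * q ^ ((p.1 : ℕ) * (2 * (p.2 : ℕ) - 1)) =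
      -∑' k : ℕ, q ^ (2 * k + 1) / (1 + q ^ (2 * k + 1)) ^ 2 := by
  have hs : Summable fun p : ℕ+ × ℕ+ =>
      (-1 : ℝ) ^ (p.1 : ℕ) * (p.1 : ℝ) * q ^ ((p.1 : ℕ) * (2 * (p.2 : ℕ) - 1)) := by
    have f1 : Summable fun m : ℕ+ => (m : ℝ) * q ^ (m : ℕ) := by
      have h : Summable fun m : ℕ => (m : ℝ) * q ^ m := by
        simpa using summable_pow_mul_geometric_of_norm_lt_one 1
          (r := q) (by rwa [Real.norm_of_nonneg hq.le])
      exact h.comp_injective PNat.coe_injective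
    have f2 : Summable fun n : ℕ+ => q ^ ((n : ℕ) - 1) := by
      refine (summable_pnat_iff_summable_succ (f := fun n : ℕ => q ^ (n - 1))).2 ?_
      simpa using summable_geometric_of_lt_one hq.le hq1
    refine Summable.of_norm_bounded
      (f1.mul_of_nonneg f2 (fun m => by positivity) (fun n => by positivity)) fun p => ?_
    obtain ⟨m, n⟩ := p
    simp only [norm_mul, norm_pow, norm_neg, norm_one, one_pow, one_mul, Real.norm_natCast,
      Real.norm_of_nonneg hq.le]
    rw [mul_assoc, ← pow_add]
    refine mul_le_mul_of_nonneg_left (pow_le_pow_of_le_one hq.le hq1.le ?_) (by positivity)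
    -- `m (2n - 1) ≥ m + (n - 1)`
    have hm := m.pos
    obtain ⟨j, hj⟩ : ∃ j, (n : ℕ) = j + 1 := ⟨(n : ℕ) - 1, by have := n.pos; omega⟩
    rw [hj, show 2 * (j + 1) - 1 = 2 * j + 1 by omega, Nat.add_sub_cancel]
    nlinarith
  rw [← (Equiv.prodComm ℕ+ ℕ+).tsum_eq, ← tsum_neg]
  refine (Summable.tsum_prod hs.prod_symm).trans ?_
  refine (tsum_pnat_eq_tsum_succ (f := fun n : ℕ => ∑' m : ℕ+, (-1 : ℝ) ^ (m : ℕ) * (m : ℝ) *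
    q ^ ((m : ℕ) * (2 * n - 1)))).trans (tsum_congr fun k => ?_)
  rw [show 2 * (k + 1) - 1 = 2 * k + 1 by omega]
  have hx0 : 0 < q ^ (2 * k + 1) := pow_pos hq _
  have hx1 : q ^ (2 * k + 1) < 1 := pow_lt_one₀ hq.le hq1 (by omega)
  rw [tsum_pnat_eq_tsum_of_eq_zero (f := fun m : ℕ => (-1 : ℝ) ^ m * (m : ℝ) *
    q ^ (m * (2 * k + 1))) (by simp)]
  have hg := tsum_coe_mul_geometric_of_norm_lt_one (r := -q ^ (2 * k + 1))
    (by rwa [norm_neg, Real.norm_of_nonneg hx0.le])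
  rw [sub_neg_eq_add, neg_div] at hg
  rw [← hg]
  refine tsum_congr fun m => ?_
  rw [mul_comm m, pow_mul, neg_pow]
  ring

/-- `tⁿ + t⁻ⁿ - 2 = (tⁿ - 1)²/tⁿ`, with `(t - 1)²` factored out. -/
theorem zpow_sum {t : ℝ} (ht : 0 < t) (n : ℤ) :
    t ^ n + t ^ (-n) - 2 =
      (t - 1) ^ 2 * ((∑ i ∈ Finset.range n.natAbs, t ^ i) ^ 2 * (t ^ n.natAbs)⁻¹) := by
  have key : ∀ N : ℕ, t ^ N + (t ^ N)⁻¹ - 2 =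
      (t - 1) ^ 2 * ((∑ i ∈ Finset.range N, t ^ i) ^ 2 * (t ^ N)⁻¹) := by
    intro N
    have h : (t - 1) ^ 2 * ((∑ i ∈ Finset.range N, t ^ i) ^ 2 * (t ^ N)⁻¹) =
        ((∑ i ∈ Finset.range N, t ^ i) * (t - 1)) ^ 2 * (t ^ N)⁻¹ := by ring
    rw [h, geom_sum_mul]
    have := (pow_pos ht N).ne'
    field_simp
    ring
  rw [← key]
  obtain ⟨N, rfl | rfl⟩ := n.eq_nat_or_neg
  · simp
  · simp [add_comm]

theorem summable_B0 {t u : ℝ} (ht : 0 < t) (hu : 0 < u) (hu1 : u < 1) :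
    Summable fun n : ℤ => u ^ (n ^ 2) * t ^ n := by
  refine Summable.of_nonneg_of_le (fun n => by positivity) (fun n => ?_)
    ((by simpa using summable_theta_bound 0 hu hu1 (add_pos ht (inv_pos.2 ht))) :
      Summable fun n : ℤ => u ^ (n ^ 2) * (t + t⁻¹) ^ n.natAbs)
  have := inv_pos.2 ht
  gcongr
  rcases Int.natAbs_eq n with h | h
  · rw [h]; simp only [Int.natAbs_natCast, zpow_natCast]; gcongr; linarith
  · rw [h]; simp only [Int.natAbs_natCast, Int.natAbs_neg, zpow_neg, zpow_natCast, ← inv_pow]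
    gcongr; linarith

/-- Averaging the terms `n` and `-n` exhibits the factor `(t - 1)²`. -/
theorem B0_sub {t u : ℝ} (ht : 0 < t) (hu : 0 < u) (hu1 : u < 1) :
    B0 t u - B0 1 u = (t - 1) ^ 2 / 2 * ∑' n : ℤ, u ^ (n ^ 2) *
      ((∑ i ∈ Finset.range n.natAbs, t ^ i) ^ 2 * (t ^ n.natAbs)⁻¹) := by
  have h1 := (summable_B0 ht hu hu1).hasSum
  have h2 := (Equiv.neg ℤ).hasSum_iff.2 h1
  have h3 := (summable_B0 one_pos hu hu1).hasSum
  have h4 := (h1.add h2).sub (h3.mul_left 2)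
  have h5 : ∀ n : ℤ, u ^ (n ^ 2) * t ^ n + ((fun n : ℤ => u ^ (n ^ 2) * t ^ n) ∘ Equiv.neg ℤ) n -
      2 * (u ^ (n ^ 2) * 1 ^ n) = (t - 1) ^ 2 * (u ^ (n ^ 2) *
      ((∑ i ∈ Finset.range n.natAbs, t ^ i) ^ 2 * (t ^ n.natAbs)⁻¹)) := by
    intro n
    have := zpow_sum ht n
    simp only [Function.comp, Equiv.neg_apply, neg_sq, one_zpow]
    linear_combination u ^ (n ^ 2) * this
  have h6 := h4.tsum_eq
  simp only [h5, tsum_mul_left] at h6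
  simp only [B0]
  linarith

theorem B0_limit (q : ℝ) (hq0 : 0 < q) (hq1 : q < 1) :
    Tendsto (fun t : ℝ => (B0 t (t ^ 2 * q) - B0 1 (t ^ 2 * q)) / ((t + 1) * (t - 1) ^ 2))
      (nhdsWithin 1 {t : ℝ | 0 < t ∧ t ^ 2 * q < 1 ∧ t ≠ 1})
      (nhds (-(1/2) *
        (∑' p : ℕ+ × ℕ+, (-1 : ℝ) ^ (p.1 : ℕ) * (p.1 : ℝ) *
          q ^ ((p.1 : ℕ) * (2 * (p.2 : ℕ) - 1))) * B0 1 q)) := by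
  -- A radius `r` such that the majorant stays summable for `t` in `(r⁻¹, r)`.
  obtain ⟨r, hr1, hrq⟩ : ∃ r : ℝ, 1 < r ∧ r ^ 2 * q < 1 := by
    refine ⟨2 / (1 + q), by rw [lt_div_iff₀] <;> linarith, ?_⟩
    rw [div_pow, div_mul_eq_mul_div, div_lt_one (by positivity)]
    nlinarith [sq_pos_of_pos (sub_pos.2 hq1)]
  have hr0 : 0 < r := by linarith
  have hlim : Tendsto (fun t : ℝ => ∑' n : ℤ, (t ^ 2 * q) ^ (n ^ 2) *
      ((∑ i ∈ Finset.range n.natAbs, t ^ i) ^ 2 * (t ^ n.natAbs)⁻¹))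
      (nhds 1) (nhds (∑' n : ℤ, (n : ℝ) ^ 2 * q ^ (n ^ 2))) := by
    refine tendsto_tsum_of_dominated_convergence
      (summable_theta_bound 2 (by positivity) hrq (pow_pos hr0 3)) (fun n => ?_) ?_
    · have hc : ContinuousAt (fun t : ℝ => (t ^ 2 * q) ^ (n ^ 2) *
          ((∑ i ∈ Finset.range n.natAbs, t ^ i) ^ 2 * (t ^ n.natAbs)⁻¹)) 1 := by
        refine ContinuousAt.mul (ContinuousAt.zpow₀ (by fun_prop) _ (Or.inl (by simp [hq0.ne'])))
          (ContinuousAt.mul (by fun_prop) (ContinuousAt.inv₀ (by fun_prop) (by simp)))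
      convert hc.tendsto using 2
      simp [mul_comm]
    · have hI : Set.Ioo r⁻¹ r ∈ nhds (1 : ℝ) := Ioo_mem_nhds (inv_lt_one_of_one_lt₀ hr1) hr1
      filter_upwards [hI] with t ht n
      have hri : 0 < r⁻¹ := inv_pos.2 hr0
      have ht0 : 0 < t := hri.trans ht.1
      have hti : t⁻¹ ≤ r := (inv_le_comm₀ ht0 hr0).2 ht.1.le
      rw [Real.norm_of_nonneg (by positivity)]
      have hsum : ∑ i ∈ Finset.range n.natAbs, t ^ i ≤ |(n : ℝ)| * r ^ n.natAbs := by
        have : ∑ i ∈ Finset.range n.natAbs, t ^ i ≤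
            ∑ i ∈ Finset.range n.natAbs, r ^ n.natAbs := by
          refine Finset.sum_le_sum fun i hi => ?_
          calc t ^ i ≤ r ^ i := by gcongr; exact ht.2.le
            _ ≤ r ^ n.natAbs := pow_le_pow_right₀ hr1.le (Finset.mem_range.1 hi).le
        simpa [Nat.cast_natAbs] using this
      have hz : (t ^ 2 * q) ^ (n ^ 2) ≤ (r ^ 2 * q) ^ (n ^ 2) := by
        refine zpow_le_zpow_left₀ (by positivity) (by positivity) ?_
        gcongr; exact ht.2.le
      calc _ ≤ (r ^ 2 * q) ^ (n ^ 2) * ((|(n : ℝ)| * r ^ n.natAbs) ^ 2 * r ^ n.natAbs) := by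
            rw [← inv_pow]
            gcongr
        _ = _ := by ring
  have hM := theta_moment hq0 hq1
  rw [hM] at hlim
  rw [double_sum hq0 hq1]
  have h2 : Tendsto (fun t : ℝ => (2 * (t + 1))⁻¹) (nhds 1) (nhds ((2 * (1 + 1))⁻¹)) :=
    ContinuousAt.inv₀ (by fun_prop) (by norm_num)
  have h3 := (h2.mul hlim).mono_left
    (nhdsWithin_le_nhds (s := {t : ℝ | 0 < t ∧ t ^ 2 * q < 1 ∧ t ≠ 1}))
  convert h3.congr' ?_ using 2
  · ring
  · filter_upwards [self_mem_nhdsWithin] with t ht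
    obtain ⟨ht0, htq, ht1⟩ := ht
    rw [B0_sub ht0 (by positivity) htq]
    have : t - 1 ≠ 0 := sub_ne_zero.2 ht1
    have : t + 1 ≠ 0 := by positivity
    field_simp
end

section
/- Let 0 < q < 1 and define B₁(t,u) = ∑_{n∈ℤ+1/2} u^{n²} tⁿ for t > 0 and 0 < u < 1 (real powers of the positive reals u and t). Then lim_{t→1} (B₁(t,t²q) − B₁(1,t²q))/((t+1)(t−1)²) = −(1/2)·(∑_{m,n>0} (−1)^m m q^{2mn} − 1/8)·B₁(1,q), where the limit is over real t > 0 with t²q < 1. -/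
/-!
Write `n = k + 1/2` and `s = log t`. Pairing `n` with `-n` gives
`B₁(t,u) - B₁(1,u) = ∑ u^(n²) (cosh (n s) - 1)`, and `(cosh (n s) - 1) / s² → n² / 2`. By dominated
convergence (`tendsto_cosh_quotient`, using `cosh y ≤ exp (y² / 2)`) the limit in question equals
`(1/4) ∑ n² q^(n²)`, so the theorem amounts to the identity
`∑ n² q^(n²) = (1/4 - 2 ∑_{m,n>0} (-1)^m m q^(2mn)) ∑ q^(n²)`.

This identity is the second logarithmic derivative at `t = 1` of the Jacobi triple product. It is
derived from the finite product `(1 + t⁻¹) ∏_{i=1}^N (1 + x^i t) (1 + x^i t⁻¹)` with `x = q²`. The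
moments of its coefficients follow from the recursion in `N` (`tripleCoeff_moments`): the ratio of
the second moment to the mass is `1/4 + 2 ∑_{i ≤ N} x^i / (1 + x^i)²`. An explicit ratio of
consecutive coefficients (`tripleCoeff_ratio`) shows that, after rescaling, they are dominated by
`q^(n²)` and converge to it, so `N → ∞` can be taken termwise (`gaussTerm_second_moment`). The
resulting Lambert series is the double series up to sign (`lambert`).
-/

open Filter

/-- `B₁(t,u) = ∑_{n∈ℤ+1/2} u^{n²} tⁿ`, real powers of positive reals. -/
noncomputable def B1 (t u : ℝ) : ℝ :=
  ∑' n : ℤ, u ^ (((n : ℝ) + 1/2) ^ 2) * t ^ ((n : ℝ) + 1/2)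

open Topology

lemma hasSum_of_eq {ι : Type*} {f g : ι → ℝ} {a b : ℝ} (h : HasSum f a) (hf : ∀ k, g k = f k)
    (hab : b = a) : HasSum g b := by
  rw [hab, funext hf]
  exact h

/-! ### The finite triple product -/

/-- The coefficient of `t ^ k` in `(1 + t⁻¹) * ∏_{i=1}^N (1 + x^i t) (1 + x^i t⁻¹)`, the finite form
of the Jacobi triple product. The recursion multiplies by the factor `i = N + 1`, which equals
`1 + x^(2(N+1)) + x^(N+1) (t + t⁻¹)`. -/
noncomputable def tripleCoeff (x : ℝ) : ℕ → ℤ → ℝ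
  | 0, k => if k = 0 ∨ k = -1 then 1 else 0
  | N + 1, k => (1 + (x ^ (N + 1)) ^ 2) * tripleCoeff x N k
      + x ^ (N + 1) * (tripleCoeff x N (k - 1) + tripleCoeff x N (k + 1))

lemma tripleCoeff_symm (x : ℝ) (N : ℕ) (k : ℤ) :
    tripleCoeff x N (-1 - k) = tripleCoeff x N k := by
  induction N generalizing k with
  | zero =>
    simp only [tripleCoeff]
    congr 1
    apply propext
    omega
  | succ N ih =>
    simp only [tripleCoeff]
    rw [show -1 - k - 1 = -1 - (k + 1) by ring, show -1 - k + 1 = -1 - (k - 1) by ring, ih, ih, ih]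
    ring

lemma tripleCoeff_nonneg {x : ℝ} (hx : 0 < x) (N : ℕ) (k : ℤ) : 0 ≤ tripleCoeff x N k := by
  induction N generalizing k with
  | zero => simp only [tripleCoeff]; split_ifs <;> norm_num
  | succ N ih =>
    simp only [tripleCoeff]
    have := ih k
    have := ih (k - 1)
    have := ih (k + 1)
    positivity

lemma tripleCoeff_zero_pos {x : ℝ} (hx : 0 < x) (N : ℕ) : 0 < tripleCoeff x N 0 := by
  induction N with
  | zero => simp [tripleCoeff]
  | succ N ih =>
    simp only [tripleCoeff]
    have := tripleCoeff_nonneg hx N (0 - 1)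
    have := tripleCoeff_nonneg hx N (0 + 1)
    positivity

/-- Consecutive coefficients have an explicit ratio. This replaces the closed form
`[2N+1 choose N+1+k]_x * x^(k(k+1)/2)`; being free of denominators, it holds for every integer `k`. -/
lemma tripleCoeff_ratio {x : ℝ} (hx : 0 < x) (N : ℕ) (k : ℤ) :
    tripleCoeff x N (k + 1) * (1 - x ^ (N + 1) * x ^ (k + 1))
      = (x ^ (k + 1) - x ^ (N + 1)) * tripleCoeff x N k := by
  induction N generalizing k with
  | zero =>
    simp only [tripleCoeff]
    by_cases h0 : k = 0
    · subst h0; simp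
    by_cases h1 : k = -1
    · subst h1; simp
    by_cases h2 : k = -2
    · subst h2; norm_num; field_simp; norm_num
    rw [if_neg (by omega), if_neg (by omega)]
    simp
  | succ N ih =>
    have e0 := ih k
    have e1 := ih (k + 1)
    have e2 := ih (k - 1)
    simp only [tripleCoeff]
    rw [show k - 1 + 1 = k by ring] at e2
    rw [show k + 1 - 1 = k by ring]
    have hz : x ^ (k + 1) = x ^ k * x := zpow_add_one₀ hx.ne' k
    have hz2 : x ^ (k + 1 + 1) = x ^ k * x * x := by rw [zpow_add_one₀ hx.ne', hz]
    rw [hz2] at e1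
    rw [hz] at e0 ⊢
    rw [pow_succ x (N + 1)]
    generalize x ^ (N + 1) = y at *
    generalize x ^ k = z at *
    -- Eliminating the coefficients at `k + 2` and `k - 1` leaves the case `k` multiplied by `1 + x * y ^ 2`.
    linear_combination (1 + x * y ^ 2) * e0 + y * e1 + y * x * e2

/-- The moments of orders 0, 1, 2 about `-1/2`. A step `N → N + 1` multiplies the total mass `M` by
`(1 + y)²`, where `y = x^(N+1)`, and since `(n+1)² + (n-1)² = 2n² + 2` it adds `2 y M` to
`(1 + y)²` times the second moment. -/
lemma tripleCoeff_moments (x : ℝ) (hx : 0 < x) (N : ℕ) :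
    ∃ M : ℝ, HasSum (tripleCoeff x N) M ∧
      HasSum (fun k : ℤ => ((k : ℝ) + 1/2) * tripleCoeff x N k) 0 ∧
      HasSum (fun k : ℤ => ((k : ℝ) + 1/2) ^ 2 * tripleCoeff x N k)
        (M * (1/4 + 2 * ∑ i ∈ Finset.range N, x ^ (i + 1) / (1 + x ^ (i + 1)) ^ 2)) := by
  induction N with
  | zero =>
    have key : ∀ f : ℤ → ℝ, HasSum (fun k => f k * tripleCoeff x 0 k) (f 0 + f (-1)) := by
      intro f
      have : HasSum (fun k => f k * tripleCoeff x 0 k)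
          (∑ k ∈ ({0, -1} : Finset ℤ), f k * tripleCoeff x 0 k) :=
        hasSum_sum_of_ne_finset_zero (by
          intro b hb
          simp only [Finset.mem_insert, Finset.mem_singleton] at hb
          simp [tripleCoeff, hb])
      simpa [tripleCoeff] using this
    refine ⟨2, ?_, ?_, ?_⟩
    · exact hasSum_of_eq (key fun _ => 1) (fun k => by ring) (by norm_num)
    · exact hasSum_of_eq (key fun k => (k : ℝ) + 1/2) (fun k => rfl) (by norm_num)
    · exact hasSum_of_eq (key fun k => ((k : ℝ) + 1/2) ^ 2) (fun k => rfl) (by norm_num)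
  | succ N ih =>
    obtain ⟨M, h0, h1, h2⟩ := ih
    set y := x ^ (N + 1) with hy
    have hy0 : 0 < y := by positivity
    set V := M * (1/4 + 2 * ∑ i ∈ Finset.range N, x ^ (i + 1) / (1 + x ^ (i + 1)) ^ 2) with hV
    have up : ∀ {f : ℤ → ℝ} {a : ℝ}, HasSum f a → HasSum (fun k => f (k - 1)) a :=
      fun h => (Equiv.subRight (1 : ℤ)).hasSum_iff.mpr h
    have dn : ∀ {f : ℤ → ℝ} {a : ℝ}, HasSum f a → HasSum (fun k => f (k + 1)) a :=
      fun h => (Equiv.addRight (1 : ℤ)).hasSum_iff.mpr h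
    refine ⟨(1 + y) ^ 2 * M, ?_, ?_, ?_⟩
    · exact hasSum_of_eq ((h0.mul_left (1 + y ^ 2)).add (((up h0).add (dn h0)).mul_left y))
        (fun k => rfl) (by ring)
    · refine hasSum_of_eq ((h1.mul_left (1 + y ^ 2)).add
        (((up (h1.add h0)).add (dn (h1.sub h0))).mul_left y)) (fun k => ?_) (by ring)
      simp only [tripleCoeff, ← hy]
      push_cast
      ring
    · refine hasSum_of_eq ((h2.mul_left (1 + y ^ 2)).add
        (((up ((h2.add (h1.mul_left 2)).add h0)).add
          (dn ((h2.sub (h1.mul_left 2)).add h0))).mul_left y)) (fun k => ?_) ?_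
      · simp only [tripleCoeff, ← hy]
        push_cast
        ring
      · rw [Finset.sum_range_succ, ← hy, hV]
        field_simp
        ring

/-! ### The theta series and its second moment -/

/-- The term `u ^ (n²)` with `n = k + 1/2`. -/
noncomputable def gaussTerm (u : ℝ) (k : ℤ) : ℝ := u ^ (((k : ℝ) + 1/2) ^ 2)

lemma gaussTerm_pos {u : ℝ} (hu : 0 < u) (k : ℤ) : 0 < gaussTerm u k := Real.rpow_pos_of_pos hu _

lemma gaussTerm_symm (u : ℝ) (k : ℤ) : gaussTerm u (-1 - k) = gaussTerm u k := by
  unfold gaussTerm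
  congr 1
  push_cast
  ring

lemma gaussTerm_succ {u : ℝ} (hu : 0 < u) (k : ℤ) :
    gaussTerm u (k + 1) = (u ^ 2) ^ (k + 1) * gaussTerm u k := by
  unfold gaussTerm
  rw [← Real.rpow_natCast u 2, ← Real.rpow_intCast, ← Real.rpow_mul hu.le, ← Real.rpow_add hu]
  congr 1
  push_cast
  ring

lemma summable_sq_gaussTerm {u : ℝ} (hu : 0 < u) (hu1 : u < 1) :
    Summable (fun k : ℤ => ((k : ℝ) + 1/2) ^ 2 * gaussTerm u k) := by
  have hnat : Summable (fun k : ℕ => (((k : ℤ) : ℝ) + 1/2) ^ 2 * gaussTerm u k) := by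
    have hn : ‖u‖ < 1 := by rwa [Real.norm_of_nonneg hu.le]
    have hs := ((summable_pow_mul_geometric_of_norm_lt_one 2 hn).add
      ((summable_pow_mul_geometric_of_norm_lt_one 1 hn).mul_left 2)).add
        (summable_geometric_of_lt_one hu.le hu1)
    refine hs.of_nonneg_of_le (fun k => mul_nonneg (sq_nonneg _) (gaussTerm_pos hu _).le) ?_
    intro k
    have hk : (0 : ℝ) ≤ k := Nat.cast_nonneg k
    have h1 : gaussTerm u k ≤ u ^ k := by
      rw [← Real.rpow_natCast]
      refine Real.rpow_le_rpow_of_exponent_ge hu hu1.le ?_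
      push_cast
      nlinarith
    calc _ ≤ ((k : ℝ) + 1) ^ 2 * u ^ k := by
          refine mul_le_mul ?_ h1 (gaussTerm_pos hu _).le (by positivity)
          push_cast
          nlinarith
      _ = _ := by ring
  refine Summable.of_nat_of_neg_add_one hnat ?_
  refine hnat.congr fun k => ?_
  rw [show (-((k : ℤ) + 1)) = -1 - (k : ℤ) by ring, gaussTerm_symm]
  push_cast
  ring

lemma summable_gaussTerm {u : ℝ} (hu : 0 < u) (hu1 : u < 1) : Summable (gaussTerm u) := by
  refine ((summable_sq_gaussTerm hu hu1).mul_left 4).of_nonneg_of_le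
    (fun k => (gaussTerm_pos hu k).le) fun k => ?_
  have h : (1 : ℝ) ≤ 4 * ((k : ℝ) + 1/2) ^ 2 := by
    have : (0 : ℝ) ≤ (k : ℝ) * (k + 1) := by
      have : 0 ≤ k * (k + 1) := by
        rcases le_or_gt 0 k with h | h
        · positivity
        · nlinarith
      exact_mod_cast this
    nlinarith
  nlinarith [gaussTerm_pos hu k]

/-- Induction on half-integers `k + 1/2` modulo sign: the reflection `k ↦ -1 - k` reduces a claim
about all integers to the nonnegative ones. -/
lemma int_reflect_induction {P : ℤ → Prop} (hs : ∀ k, P k → P (-1 - k)) (h0 : P 0)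
    (h : ∀ k : ℕ, P k → P (k + 1)) (k : ℤ) : P k := by
  have hn : ∀ k : ℕ, P k := fun k => by
    induction k with
    | zero => exact h0
    | succ k ih => exact_mod_cast h k ih
  rcases le_or_gt 0 k with hk | hk
  · lift k to ℕ using hk
    exact hn k
  · have := hs _ (hn (-1 - k).toNat)
    rwa [Int.toNat_of_nonneg (by omega), show -1 - (-1 - k) = k by ring] at this

/-- The coefficients `tripleCoeff (q ^ 2) N`, rescaled so that the one at `k = 0` is `q ^ (1/4)`; they
are dominated by `gaussTerm q` and converge to it as `N → ∞`. -/
noncomputable def normCoeff (q : ℝ) (N : ℕ) (k : ℤ) : ℝ :=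
  gaussTerm q 0 / tripleCoeff (q ^ 2) N 0 * tripleCoeff (q ^ 2) N k

lemma normCoeff_nonneg {q : ℝ} (hq : 0 < q) (N : ℕ) (k : ℤ) : 0 ≤ normCoeff q N k :=
  mul_nonneg (div_nonneg (gaussTerm_pos hq 0).le (tripleCoeff_zero_pos (by positivity) N).le)
    (tripleCoeff_nonneg (by positivity) N k)

lemma normCoeff_zero {q : ℝ} (hq : 0 < q) (N : ℕ) : normCoeff q N 0 = gaussTerm q 0 :=
  div_mul_cancel₀ _ (tripleCoeff_zero_pos (by positivity) N).ne'

lemma normCoeff_symm (q : ℝ) (N : ℕ) (k : ℤ) : normCoeff q N (-1 - k) = normCoeff q N k := by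
  simp only [normCoeff, tripleCoeff_symm]

lemma normCoeff_succ {q : ℝ} (hq : 0 < q) (hq1 : q < 1) (N k : ℕ) :
    normCoeff q N (k + 1) = ((q ^ 2) ^ (k + 1) - (q ^ 2) ^ (N + 1))
      / (1 - (q ^ 2) ^ (N + 1) * (q ^ 2) ^ (k + 1)) * normCoeff q N k := by
  have hx : 0 < q ^ 2 := by positivity
  have hx1 : q ^ 2 < 1 := by nlinarith
  have hy := pow_lt_one₀ hx.le hx1 (Nat.succ_ne_zero N)
  have hz := pow_lt_one₀ hx.le hx1 (Nat.succ_ne_zero k)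
  have hy0 : 0 < (q ^ 2) ^ (N + 1) := by positivity
  have hz0 : 0 < (q ^ 2) ^ (k + 1) := by positivity
  have hd : 0 < 1 - (q ^ 2) ^ (N + 1) * (q ^ 2) ^ (k + 1) := by
    simp only [Nat.succ_eq_add_one] at hy hz
    nlinarith
  have h := tripleCoeff_ratio hx N k
  have e : (q ^ 2) ^ ((k : ℤ) + 1) = (q ^ 2) ^ (k + 1) := zpow_natCast _ (k + 1)
  rw [e] at h
  unfold normCoeff
  rw [div_mul_eq_mul_div _ _ (_ * _), eq_div_iff hd.ne']
  linear_combination gaussTerm q 0 / tripleCoeff (q ^ 2) N 0 * h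

lemma normCoeff_le {q : ℝ} (hq : 0 < q) (hq1 : q < 1) (N : ℕ) (k : ℤ) :
    normCoeff q N k ≤ gaussTerm q k := by
  refine int_reflect_induction (P := fun k => normCoeff q N k ≤ gaussTerm q k)
    (fun k h => by rwa [normCoeff_symm, gaussTerm_symm]) (normCoeff_zero hq N).le (fun k h => ?_) k
  have hx : 0 < q ^ 2 := by positivity
  have hx1 : q ^ 2 < 1 := by nlinarith
  have hy := pow_lt_one₀ hx.le hx1 (Nat.succ_ne_zero N)
  have hz := pow_lt_one₀ hx.le hx1 (Nat.succ_ne_zero k)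
  have hy0 : 0 < (q ^ 2) ^ (N + 1) := by positivity
  have hz0 : 0 < (q ^ 2) ^ (k + 1) := by positivity
  have e : (q ^ 2) ^ ((k : ℤ) + 1) = (q ^ 2) ^ (k + 1) := zpow_natCast _ (k + 1)
  rw [normCoeff_succ hq hq1, gaussTerm_succ hq, e]
  simp only [Nat.succ_eq_add_one] at hy hz
  generalize (q ^ 2) ^ (N + 1) = y at *
  generalize (q ^ 2) ^ (k + 1) = z at *
  refine mul_le_mul ?_ h (normCoeff_nonneg hq _ _) hz0.le
  rw [div_le_iff₀ (by nlinarith)]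
  nlinarith [mul_pos hz0 hy0, mul_nonneg hy0.le (show 0 ≤ 1 - z ^ 2 by nlinarith)]

lemma normCoeff_tendsto {q : ℝ} (hq : 0 < q) (hq1 : q < 1) (k : ℤ) :
    Tendsto (fun N => normCoeff q N k) atTop (𝓝 (gaussTerm q k)) := by
  refine int_reflect_induction
    (P := fun k => Tendsto (fun N => normCoeff q N k) atTop (𝓝 (gaussTerm q k)))
    (fun k h => by simpa only [normCoeff_symm, gaussTerm_symm] using h) ?_ (fun k h => ?_) k
  · simp only [normCoeff_zero hq]
    exact tendsto_const_nhds
  have hx : 0 < q ^ 2 := by positivity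
  have hx1 : q ^ 2 < 1 := by nlinarith
  have e : (q ^ 2) ^ ((k : ℤ) + 1) = (q ^ 2) ^ (k + 1) := zpow_natCast _ (k + 1)
  simp only [normCoeff_succ hq hq1]
  rw [gaussTerm_succ hq, e]
  have hy : Tendsto (fun N : ℕ => (q ^ 2) ^ (N + 1)) atTop (𝓝 0) :=
    (tendsto_pow_atTop_nhds_zero_of_lt_one hx.le hx1).comp (tendsto_add_atTop_nat 1)
  refine Tendsto.mul ?_ h
  have := (hy.const_sub ((q ^ 2) ^ (k + 1))).div ((hy.mul_const ((q ^ 2) ^ (k + 1))).const_sub 1)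
    (by simp)
  simpa [Pi.div_def] using this

/-- The second moment of `q ^ (n²)`, obtained from `tripleCoeff_moments` by dominated convergence
as `N → ∞`. -/
lemma gaussTerm_second_moment {q L : ℝ} (hq : 0 < q) (hq1 : q < 1)
    (hL : HasSum (fun n : ℕ => (q ^ 2) ^ (n + 1) / (1 + (q ^ 2) ^ (n + 1)) ^ 2) L) :
    ∑' k : ℤ, ((k : ℝ) + 1/2) ^ 2 * gaussTerm q k = (∑' k : ℤ, gaussTerm q k) * (1/4 + 2 * L) := by
  have h0 : Tendsto (fun N => ∑' k : ℤ, normCoeff q N k) atTop (𝓝 (∑' k : ℤ, gaussTerm q k)) :=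
    tendsto_tsum_of_dominated_convergence (summable_gaussTerm hq hq1)
      (normCoeff_tendsto hq hq1) (.of_forall fun N k => by
        rw [Real.norm_of_nonneg (normCoeff_nonneg hq N k)]
        exact normCoeff_le hq hq1 N k)
  have h2 : Tendsto (fun N => ∑' k : ℤ, ((k : ℝ) + 1/2) ^ 2 * normCoeff q N k) atTop
      (𝓝 (∑' k : ℤ, ((k : ℝ) + 1/2) ^ 2 * gaussTerm q k)) :=
    tendsto_tsum_of_dominated_convergence (summable_sq_gaussTerm hq hq1)
      (fun k => (normCoeff_tendsto hq hq1 k).const_mul _) (.of_forall fun N k => by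
        rw [Real.norm_of_nonneg (mul_nonneg (sq_nonneg _) (normCoeff_nonneg hq N k))]
        exact mul_le_mul_of_nonneg_left (normCoeff_le hq hq1 N k) (sq_nonneg _))
  refine tendsto_nhds_unique h2 ?_
  refine (h0.mul ((hL.tendsto_sum_nat.const_mul 2).const_add (1/4))).congr fun N => ?_
  obtain ⟨M, m0, -, m2⟩ := tripleCoeff_moments (q ^ 2) (by positivity) N
  have e0 : ∑' k : ℤ, normCoeff q N k = _ :=
    (m0.mul_left (gaussTerm q 0 / tripleCoeff (q ^ 2) N 0)).tsum_eq
  have e2 := (m2.mul_left (gaussTerm q 0 / tripleCoeff (q ^ 2) N 0)).tsum_eq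
  rw [e0, mul_assoc, ← e2]
  refine tsum_congr fun k => ?_
  unfold normCoeff
  ring

/-- Summing over `m` first turns the double series into a Lambert series, by
`∑ m (-z)^m = -z / (1 + z)²` at `z = q^(2n)`. -/
lemma lambert {q : ℝ} (hq : 0 < q) (hq1 : q < 1) :
    HasSum (fun n : ℕ => (q ^ 2) ^ (n + 1) / (1 + (q ^ 2) ^ (n + 1)) ^ 2)
      (-∑' p : ℕ+ × ℕ+, (-1 : ℝ) ^ (p.1 : ℕ) * (p.1 : ℝ) * q ^ (2 * (p.1 : ℕ) * (p.2 : ℕ))) := by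
  have hx : 0 < q ^ 2 := by positivity
  have hx1 : q ^ 2 < 1 := by nlinarith
  have hs : Summable (fun c : ℕ+ × ℕ+ => (-1 : ℝ) ^ (c.2 : ℕ) * (c.2 : ℝ) *
      q ^ (2 * (c.2 : ℕ) * (c.1 : ℕ))) := by
    refine Summable.of_norm ((summable_prod_mul_pow (𝕜 := ℝ) 1 (r := q ^ 2)
      (by rwa [Real.norm_of_nonneg hx.le])).congr fun c => ?_)
    rw [norm_mul, norm_mul, norm_pow, norm_neg, norm_one, one_pow, one_mul, pow_one,
      Real.norm_of_nonneg (by positivity), Real.norm_of_nonneg (by positivity), ← pow_mul]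
    congr 2
    ring
  have h1 := hs.hasSum.prod_fiberwise (fun n => (hs.prod_factor n).hasSum)
  rw [← (Equiv.prodComm ℕ+ ℕ+).tsum_eq] at h1
  simp only [Equiv.prodComm_apply, Prod.snd_swap, Prod.fst_swap] at h1
  have h2 := (hasSum_pnat_iff_hasSum_succ
    (f := fun n : ℕ => -∑' b : ℕ+, (-1 : ℝ) ^ (b : ℕ) * (b : ℝ) * q ^ (2 * (b : ℕ) * n))).mp h1.neg
  refine hasSum_of_eq h2 (fun n => ?_) rfl
  have hr : ‖-(q ^ 2) ^ (n + 1)‖ < 1 := by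
    rw [norm_neg, Real.norm_of_nonneg (by positivity)]
    exact pow_lt_one₀ hx.le hx1 (Nat.succ_ne_zero n)
  have g := tsum_coe_mul_geometric_of_norm_lt_one hr
  rw [← tsum_pnat_eq_tsum_of_eq_zero (by simp)] at g
  have e : ∀ b : ℕ+, (-1 : ℝ) ^ (b : ℕ) * (b : ℝ) * q ^ (2 * (b : ℕ) * (n + 1))
      = (b : ℝ) * (-(q ^ 2) ^ (n + 1)) ^ (b : ℕ) := fun b => by
    rw [neg_pow ((q ^ 2) ^ (n + 1)), ← pow_mul, ← pow_mul]
    ring_nf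
  rw [tsum_congr e, g]
  ring

/-! ### Expansion at `t = 1` -/

lemma gaussTerm_mul_exp {u : ℝ} (hu : 0 < u) (a : ℝ) (k : ℤ) :
    gaussTerm u k * Real.exp (((k : ℝ) + 1/2) ^ 2 * a) = gaussTerm (Real.exp a * u) k := by
  unfold gaussTerm
  rw [Real.mul_rpow (Real.exp_pos a).le hu.le, ← Real.exp_mul, mul_comm a, mul_comm]

lemma gaussTerm_mono {u v : ℝ} (hu : 0 < u) (huv : u ≤ v) (k : ℤ) :
    gaussTerm u k ≤ gaussTerm v k :=
  Real.rpow_le_rpow hu.le huv (sq_nonneg _)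

/-- The bound, uniform in `|s| ≤ δ`, behind both the convergence of `B1 t (t ^ 2 * q)` at `t = exp s`
and the dominated convergence as `s → 0`. -/
lemma gaussTerm_exp_bound {q δ s : ℝ} (hq : 0 < q) (hδ : δ ≤ 1) (hs : |s| ≤ δ) (k : ℤ) :
    gaussTerm (Real.exp (2 * s) * q) k * Real.exp ((((k : ℝ) + 1/2) * s) ^ 2 / 2)
      ≤ gaussTerm (Real.exp (3 * δ) * q) k := by
  rw [show (((k : ℝ) + 1/2) * s) ^ 2 / 2 = ((k : ℝ) + 1/2) ^ 2 * (s ^ 2 / 2) by ring,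
    gaussTerm_mul_exp (by positivity), ← mul_assoc, ← Real.exp_add]
  refine gaussTerm_mono (by positivity) ?_ k
  gcongr
  have := abs_le.mp hs
  nlinarith

/-- Averaging the terms `n` and `-n` replaces `t ^ n` by `cosh (n log t)`. -/
lemma B1_eq_cosh {t u : ℝ} (ht : 0 < t) (hu : 0 < u)
    (hs : Summable fun k : ℤ => gaussTerm u k * Real.cosh (((k : ℝ) + 1/2) * Real.log t)) :
    B1 t u = ∑' k : ℤ, gaussTerm u k * Real.cosh (((k : ℝ) + 1/2) * Real.log t) := by
  have hf : ∀ k : ℤ, u ^ (((k : ℝ) + 1/2) ^ 2) * t ^ ((k : ℝ) + 1/2)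
      = gaussTerm u k * Real.exp (((k : ℝ) + 1/2) * Real.log t) := fun k => by
    rw [Real.rpow_def_of_pos ht, mul_comm (Real.log t)]
    rfl
  unfold B1
  simp only [hf]
  have hsum : Summable fun k : ℤ => gaussTerm u k * Real.exp (((k : ℝ) + 1/2) * Real.log t) := by
    refine (hs.mul_left 2).of_nonneg_of_le
      (fun k => mul_nonneg (gaussTerm_pos hu k).le (Real.exp_pos _).le) fun k => ?_
    rw [Real.cosh_eq]
    have := mul_pos (gaussTerm_pos hu k) (Real.exp_pos (-(((k : ℝ) + 1/2) * Real.log t)))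
    nlinarith
  have h1 := hsum.hasSum
  have h2 := (Equiv.subLeft (-1 : ℤ)).hasSum_iff.mpr h1
  refine (hasSum_of_eq ((h1.add h2).div_const 2) (fun k => ?_) (by ring)).tsum_eq.symm
  simp only [Function.comp_apply, Equiv.subLeft_apply, gaussTerm_symm]
  rw [Real.cosh_eq]
  push_cast
  rw [show ((-1 - (k : ℝ)) + 1/2) * Real.log t = -(((k : ℝ) + 1/2) * Real.log t) by ring]
  ring

lemma cosh_sub_one_le (y : ℝ) : Real.cosh y - 1 ≤ y ^ 2 / 2 * Real.exp (y ^ 2 / 2) := by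
  have h1 := Real.cosh_le_exp_half_sq y
  have h2 := Real.add_one_le_exp (-(y ^ 2 / 2))
  have h3 : Real.exp (-(y ^ 2 / 2)) * Real.exp (y ^ 2 / 2) = 1 := by
    rw [← Real.exp_add]; simp
  nlinarith [Real.exp_pos (y ^ 2 / 2)]

lemma tendsto_cosh_sub_one_div (c : ℝ) :
    Tendsto (fun s : ℝ => (Real.cosh (c * s) - 1) / s ^ 2) (𝓝[≠] 0) (𝓝 (c ^ 2 / 2)) := by
  have hd : HasDerivAt (fun s : ℝ => Real.sinh (c / 2 * s)) (c / 2) 0 := by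
    have := ((hasDerivAt_id (0 : ℝ)).const_mul (c / 2)).sinh
    simpa using this
  have h := (hd.tendsto_slope.pow 2).const_mul 2
  rw [show c ^ 2 / 2 = 2 * (c / 2) ^ 2 by ring]
  refine h.congr fun s => ?_
  have e : Real.cosh (c * s) = 2 * Real.sinh (c / 2 * s) ^ 2 + 1 := by
    rw [show c * s = 2 * (c / 2 * s) by ring, Real.cosh_two_mul, Real.cosh_sq]
    ring
  rw [slope_def_field, e]
  simp
  ring

lemma tendsto_cosh_quotient {q δ : ℝ} (hq : 0 < q) (hδ0 : 0 < δ) (hδ : δ ≤ 1)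
    (hQ : Real.exp (3 * δ) * q < 1) :
    Tendsto (fun s : ℝ => ∑' k : ℤ, gaussTerm (Real.exp (2 * s) * q) k *
        ((Real.cosh (((k : ℝ) + 1/2) * s) - 1) / s ^ 2)) (𝓝[≠] 0)
      (𝓝 (∑' k : ℤ, gaussTerm q k * (((k : ℝ) + 1/2) ^ 2 / 2))) := by
  refine tendsto_tsum_of_dominated_convergence (summable_sq_gaussTerm (by positivity) hQ)
    (fun k => ?_) ?_
  · refine Tendsto.mul ?_ (tendsto_cosh_sub_one_div _)
    have hc : ContinuousAt (fun s : ℝ => gaussTerm (Real.exp (2 * s) * q) k) 0 := by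
      unfold gaussTerm
      refine ContinuousAt.rpow_const (by fun_prop) (Or.inl ?_)
      positivity
    have := hc.tendsto
    simp only [mul_zero, Real.exp_zero, one_mul] at this
    exact this.mono_left nhdsWithin_le_nhds
  · have hball : ∀ᶠ s : ℝ in 𝓝[≠] 0, |s| ≤ δ := by
      refine nhdsWithin_le_nhds ?_
      filter_upwards [Metric.closedBall_mem_nhds (0 : ℝ) hδ0] with s hs
      simpa using hs
    filter_upwards [hball, self_mem_nhdsWithin] with s hs hs0 k
    have hs0' : s ≠ 0 := hs0
    have hs2 : 0 < s ^ 2 := by positivity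
    have hg := gaussTerm_pos (u := Real.exp (2 * s) * q) (by positivity) k
    have h1 := Real.one_le_cosh (((k : ℝ) + 1/2) * s)
    have h2 := cosh_sub_one_le (((k : ℝ) + 1/2) * s)
    have h3 := gaussTerm_exp_bound hq hδ hs k
    rw [Real.norm_of_nonneg (mul_nonneg hg.le (div_nonneg (by linarith) hs2.le))]
    set n := (k : ℝ) + 1/2
    calc _ ≤ gaussTerm (Real.exp (2 * s) * q) k
          * ((n * s) ^ 2 / 2 * Real.exp ((n * s) ^ 2 / 2) / s ^ 2) := by gcongr
      _ = n ^ 2 / 2 * (gaussTerm (Real.exp (2 * s) * q) k * Real.exp ((n * s) ^ 2 / 2)) := by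
        field_simp
      _ ≤ n ^ 2 / 2 * gaussTerm (Real.exp (3 * δ) * q) k := by gcongr
      _ ≤ _ := by
        have : 0 < gaussTerm (Real.exp (3 * δ) * q) k := gaussTerm_pos (by positivity) k
        nlinarith [mul_nonneg (sq_nonneg n) this.le]

lemma B1_quotient_eq {q δ t : ℝ} (hq : 0 < q) (hδ : δ ≤ 1)
    (hQ : Real.exp (3 * δ) * q < 1) (ht : 0 < t) (ht1 : t ≠ 1) (hs : |Real.log t| ≤ δ) :
    (B1 t (t ^ 2 * q) - B1 1 (t ^ 2 * q)) / ((t + 1) * (t - 1) ^ 2)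
      = (∑' k : ℤ, gaussTerm (Real.exp (2 * Real.log t) * q) k *
          ((Real.cosh (((k : ℝ) + 1/2) * Real.log t) - 1) / Real.log t ^ 2))
        * ((Real.log t / (t - 1)) ^ 2 / (t + 1)) := by
  have hl : Real.log t ≠ 0 := Real.log_ne_zero_of_pos_of_ne_one ht ht1
  have ht2 : t ^ 2 * q = Real.exp (2 * Real.log t) * q := by
    rw [mul_comm 2, Real.exp_mul, Real.exp_log ht, ← Real.rpow_natCast]
    norm_num
  rw [ht2]
  set s := Real.log t with hsdef
  set u := Real.exp (2 * s) * q with hu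
  have hu0 : 0 < u := by positivity
  have hsum : Summable fun k : ℤ => gaussTerm u k * Real.cosh (((k : ℝ) + 1/2) * s) := by
    refine (summable_gaussTerm (by positivity) hQ).of_nonneg_of_le
      (fun k => mul_nonneg (gaussTerm_pos hu0 k).le (Real.cosh_pos _).le) fun k => ?_
    refine le_trans ?_ (gaussTerm_exp_bound hq hδ hs k)
    exact mul_le_mul_of_nonneg_left (Real.cosh_le_exp_half_sq _) (gaussTerm_pos hu0 k).le
  have hsum1 : Summable (gaussTerm u) := by
    refine hsum.of_nonneg_of_le (fun k => (gaussTerm_pos hu0 k).le) fun k => ?_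
    exact le_mul_of_one_le_right (gaussTerm_pos hu0 k).le (Real.one_le_cosh _)
  have e1 : B1 1 u = ∑' k : ℤ, gaussTerm u k := by
    unfold B1
    simp only [Real.one_rpow, mul_one]
    rfl
  have e2 : B1 t u - B1 1 u
      = s ^ 2 * ∑' k : ℤ, gaussTerm u k * ((Real.cosh (((k : ℝ) + 1/2) * s) - 1) / s ^ 2) := by
    rw [B1_eq_cosh ht hu0 hsum, e1, ← hsum.tsum_sub hsum1, ← tsum_mul_left]
    refine tsum_congr fun k => ?_
    field_simp
  rw [e2, div_pow, div_div, mul_div_assoc', mul_comm (s ^ 2), mul_comm (t + 1)]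

theorem B1_limit (q : ℝ) (hq0 : 0 < q) (hq1 : q < 1) :
    Tendsto (fun t : ℝ => (B1 t (t ^ 2 * q) - B1 1 (t ^ 2 * q)) / ((t + 1) * (t - 1) ^ 2))
      (nhdsWithin 1 {t : ℝ | 0 < t ∧ t ^ 2 * q < 1 ∧ t ≠ 1})
      (nhds (-(1/2) *
        ((∑' p : ℕ+ × ℕ+, (-1 : ℝ) ^ (p.1 : ℕ) * (p.1 : ℝ) *
          q ^ (2 * (p.1 : ℕ) * (p.2 : ℕ))) - 1/8) * B1 1 q)) := by
  have hmoment := gaussTerm_second_moment hq0 hq1 (lambert hq0 hq1)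
  have e1 : B1 1 q = ∑' k : ℤ, gaussTerm q k := by
    unfold B1
    simp only [Real.one_rpow, mul_one]
    rfl
  have hlog : Real.log q < 0 := Real.log_neg hq0 hq1
  obtain ⟨δ, hδ0, hδ, hQ⟩ : ∃ δ : ℝ, 0 < δ ∧ δ ≤ 1 ∧ Real.exp (3 * δ) * q < 1 := by
    refine ⟨min 1 (-Real.log q / 6), lt_min one_pos (by linarith), min_le_left _ _, ?_⟩
    have := min_le_right 1 (-Real.log q / 6)
    nth_rewrite 2 [← Real.exp_log hq0]
    rw [← Real.exp_add, Real.exp_lt_one_iff]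
    linarith
  -- `t + 1 → 2` and `cosh y - 1 ~ y² / 2` make the limit a quarter of the second moment.
  have hval : -(1/2) * ((∑' p : ℕ+ × ℕ+, (-1 : ℝ) ^ (p.1 : ℕ) * (p.1 : ℝ) *
          q ^ (2 * (p.1 : ℕ) * (p.2 : ℕ))) - 1/8) * B1 1 q
      = (∑' k : ℤ, gaussTerm q k * (((k : ℝ) + 1/2) ^ 2 / 2)) * ((1 : ℝ) ^ 2 / (1 + 1)) := by
    have : ∑' k : ℤ, gaussTerm q k * (((k : ℝ) + 1/2) ^ 2 / 2)
        = 1/2 * ∑' k : ℤ, ((k : ℝ) + 1/2) ^ 2 * gaussTerm q k := by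
      rw [← tsum_mul_left]
      exact tsum_congr fun k => by ring
    rw [this, hmoment, e1]
    ring
  rw [hval]
  have hsub : {t : ℝ | 0 < t ∧ t ^ 2 * q < 1 ∧ t ≠ 1} ⊆ {1}ᶜ := fun t ht => ht.2.2
  refine Tendsto.mono_left ?_ (nhdsWithin_mono 1 hsub)
  have hlog0 : Tendsto Real.log (𝓝[≠] 1) (𝓝 0) := by
    have := (Real.continuousAt_log (one_ne_zero)).tendsto
    rw [Real.log_one] at this
    exact this.mono_left nhdsWithin_le_nhds
  have hpos : ∀ᶠ t : ℝ in 𝓝[≠] 1, 0 < t := nhdsWithin_le_nhds (Ioi_mem_nhds one_pos)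
  have hlog1 : Tendsto Real.log (𝓝[≠] 1) (𝓝[≠] 0) := by
    refine tendsto_nhdsWithin_iff.mpr ⟨hlog0, ?_⟩
    filter_upwards [hpos, self_mem_nhdsWithin] with t ht ht1
    exact Real.log_ne_zero_of_pos_of_ne_one ht ht1
  have hslope : Tendsto (fun t : ℝ => Real.log t / (t - 1)) (𝓝[≠] 1) (𝓝 1) := by
    have := (Real.hasDerivAt_log one_ne_zero).tendsto_slope
    rw [inv_one] at this
    refine this.congr fun t => ?_
    rw [slope_def_field, Real.log_one, sub_zero]
  have hadd : Tendsto (fun t : ℝ => t + 1) (𝓝[≠] 1) (𝓝 (1 + 1)) :=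
    ((continuous_id.add continuous_const).tendsto 1).mono_left nhdsWithin_le_nhds
  refine (((tendsto_cosh_quotient hq0 hδ0 hδ hQ).comp hlog1).mul
    ((hslope.pow 2).div hadd (by norm_num))).congr' ?_
  have hsmall : ∀ᶠ t : ℝ in 𝓝[≠] 1, |Real.log t| ≤ δ := by
    filter_upwards [hlog0 (Metric.closedBall_mem_nhds (0 : ℝ) hδ0)] with t ht
    simpa using ht
  filter_upwards [hpos, self_mem_nhdsWithin, hsmall] with t ht ht1 hs
  exact (B1_quotient_eq hq0 hδ hQ ht ht1 hs).symm
end
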